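/- arXiv:1302.5535 — 2 statements merged into one kernel-verified Lean document; each statement's English description precedes it below -/
import Mathlib

section
/- Let A ∈ ℝ^{n×n} be nonsingular and 1 ≤ k ≤ d(A) − 1. Then Ψ_{k,ℝ,ℝ}(A) = Ψ_{k,ℂ,ℝ}(A) ≤ Ψ_{k,ℂ,ℂ}(A) ≤ Ψ_{k,ℝ,ℂ}(A). -/
open Polynomial Matrix

/-- The Euclidean norm of a real vector. -/
noncomputable def euclNorm {ι : Type*} [Fintype ι] (v : ι → ℝ) : ℝ :=
  Real.sqrt (∑ i, v i ^ 2)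

/-- The Euclidean norm of a complex vector. -/
noncomputable def euclNormC {ι : Type*} [Fintype ι] (v : ι → ℂ) : ℝ :=
  Real.sqrt (∑ i, ‖v i‖ ^ 2)

/-- The Euclidean inner product of two real vectors. -/
noncomputable def edot {ι : Type*} [Fintype ι] (u v : ι → ℝ) : ℝ := ∑ i, u i * v i

/-- `p ∈ π_k`: real polynomials of degree at most `k` with value `1` at the origin. -/
def IsPik (k : ℕ) (p : Polynomial ℝ) : Prop := p.natDegree ≤ k ∧ p.eval 0 = 1

/-- `p ∈ π_{k,ℂ}`: complex polynomials of degree at most `k` with value `1` at the origin. -/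
def IsPikC (k : ℕ) (p : Polynomial ℂ) : Prop := p.natDegree ≤ k ∧ p.eval 0 = 1

/-- The `k`-th GMRES residual norm `min_{p ∈ π_k} ‖p(A)v‖`. -/
noncomputable def gmresVal {ι : Type*} [Fintype ι] [DecidableEq ι]
    (A : Matrix ι ι ℝ) (k : ℕ) (v : ι → ℝ) : ℝ :=
  sInf {s : ℝ | ∃ p : Polynomial ℝ, IsPik k p ∧ s = euclNorm ((Polynomial.aeval A p).mulVec v)}

/-- The `k`-th worst-case GMRES approximation `Ψ_k(A) = max_{‖v‖=1} min_{p ∈ π_k} ‖p(A)v‖`. -/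
noncomputable def Psi {ι : Type*} [Fintype ι] [DecidableEq ι]
    (A : Matrix ι ι ℝ) (k : ℕ) : ℝ :=
  sSup {r : ℝ | ∃ v : ι → ℝ, euclNorm v = 1 ∧ r = gmresVal A k v}

/-- `d(A)`: the degree of the minimal polynomial of `A`. -/
noncomputable def dA {ι : Type*} [Fintype ι] [DecidableEq ι] (A : Matrix ι ι ℝ) : ℕ :=
  (minpoly ℝ A).natDegree

/-- `d(A,b)`: the smallest degree of a nonzero polynomial `q` with `q(A)b = 0`. -/
noncomputable def dAb {ι : Type*} [Fintype ι] [DecidableEq ι]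
    (A : Matrix ι ι ℝ) (b : ι → ℝ) : ℕ :=
  sInf {d : ℕ | ∃ q : Polynomial ℝ, q ≠ 0 ∧ q.natDegree = d ∧ (Polynomial.aeval A q).mulVec b = 0}

/-- `r = GMRES(A,b,k)`: `r = p(A)b` for some `p ∈ π_k` minimizing `‖p(A)b‖` over `π_k`. -/
def IsGmresRes {ι : Type*} [Fintype ι] [DecidableEq ι]
    (A : Matrix ι ι ℝ) (k : ℕ) (b r : ι → ℝ) : Prop :=
  ∃ p : Polynomial ℝ, IsPik k p ∧ r = (Polynomial.aeval A p).mulVec b ∧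
    ∀ q : Polynomial ℝ, IsPik k q → euclNorm r ≤ euclNorm ((Polynomial.aeval A q).mulVec b)

/-- `p` is the `k`-th GMRES polynomial of `A` and `b`: `p ∈ π_k` minimizes `‖p(A)b‖`. -/
def IsGmresPoly {ι : Type*} [Fintype ι] [DecidableEq ι]
    (A : Matrix ι ι ℝ) (k : ℕ) (b : ι → ℝ) (p : Polynomial ℝ) : Prop :=
  IsPik k p ∧ ∀ q : Polynomial ℝ, IsPik k q →
    euclNorm ((Polynomial.aeval A p).mulVec b) ≤ euclNorm ((Polynomial.aeval A q).mulVec b)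

/-- The Krylov subspace `K_k(A,b) = span{b, Ab, …, A^{k-1}b}`. -/
noncomputable def krylov {ι : Type*} [Fintype ι] [DecidableEq ι]
    (A : Matrix ι ι ℝ) (k : ℕ) (b : ι → ℝ) : Submodule ℝ (ι → ℝ) :=
  Submodule.span ℝ (Set.range fun i : Fin k => (A ^ (i : ℕ)).mulVec b)

/-- `b` satisfies the cross equality for `A` and step `k`. -/
def CrossEq {ι : Type*} [Fintype ι] [DecidableEq ι]
    (A : Matrix ι ι ℝ) (k : ℕ) (b : ι → ℝ) : Prop :=
  ∀ r s : ι → ℝ, IsGmresRes A k b r → IsGmresRes Aᵀ k ((euclNorm r)⁻¹ • r) s →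
    b = (euclNorm s)⁻¹ • s

/-- The Krylov matrix `K(v) = [Av, A²v, …, A^k v]`. -/
noncomputable def Kmat {n : ℕ} (A : Matrix (Fin n) (Fin n) ℝ) (k : ℕ) (v : Fin n → ℝ) :
    Matrix (Fin n) (Fin k) ℝ :=
  Matrix.of fun i j => (A ^ ((j : ℕ) + 1)).mulVec v i

/-- `γ(v) = (K(v)ᵀK(v))⁻¹ K(v)ᵀ v`. -/
noncomputable def gammaVec {n : ℕ} (A : Matrix (Fin n) (Fin n) ℝ) (k : ℕ) (v : Fin n → ℝ) :
    Fin k → ℝ :=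
  ((Kmat A k v)ᵀ * Kmat A k v)⁻¹ *ᵥ ((Kmat A k v)ᵀ *ᵥ v)

/-- `g(v) = min_{c ∈ ℝ^k} ‖v - K(v)c‖²`. -/
noncomputable def gFun {n : ℕ} (A : Matrix (Fin n) (Fin n) ℝ) (k : ℕ) (v : Fin n → ℝ) : ℝ :=
  sInf {s : ℝ | ∃ c : Fin k → ℝ, s = euclNorm (v - Kmat A k v *ᵥ c) ^ 2}

/-- `p(z; c) = 1 - ∑_{j=1}^k c_j z^j`. -/
noncomputable def pPoly {k : ℕ} (c : Fin k → ℝ) : Polynomial ℝ :=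
  1 - ∑ j : Fin k, Polynomial.C (c j) * Polynomial.X ^ ((j : ℕ) + 1)

/-- `f(c,v) = ‖p(A;c)v‖²`. -/
noncomputable def fFun {n k : ℕ} (A : Matrix (Fin n) (Fin n) ℝ) (c : Fin k → ℝ)
    (v : Fin n → ℝ) : ℝ :=
  euclNorm ((Polynomial.aeval A (pPoly c)).mulVec v) ^ 2

/-- `F(c,v) = f(c,v)/(vᵀv)`. -/
noncomputable def FFun {n k : ℕ} (A : Matrix (Fin n) (Fin n) ℝ) (c : Fin k → ℝ)
    (v : Fin n → ℝ) : ℝ :=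
  fFun A c v / edot v v

/-- The Toh matrix `A(ω, ε)`. -/
noncomputable def tohMatrix (ω ε : ℝ) : Matrix (Fin 4) (Fin 4) ℝ :=
  !![1, ε, 0, 0; 0, -1, ω / ε, 0; 0, 0, 1, ε; 0, 0, 0, -1]

/-- `p` is a `k`-th worst-case GMRES polynomial of `A`. -/
def IsWCPoly {ι : Type*} [Fintype ι] [DecidableEq ι]
    (A : Matrix ι ι ℝ) (k : ℕ) (p : Polynomial ℝ) : Prop :=
  IsPik k p ∧ ∃ b : ι → ℝ, euclNorm b = 1 ∧
    (∀ q : Polynomial ℝ, IsPik k q →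
      euclNorm ((Polynomial.aeval A p).mulVec b) ≤ euclNorm ((Polynomial.aeval A q).mulVec b)) ∧
    euclNorm ((Polynomial.aeval A p).mulVec b) = Psi A k

/-- The spectral (Euclidean operator) norm of a real matrix. -/
noncomputable def specNorm {ι : Type*} [Fintype ι] (M : Matrix ι ι ℝ) : ℝ :=
  sSup {r : ℝ | ∃ v : ι → ℝ, euclNorm v = 1 ∧ r = euclNorm (M *ᵥ v)}

/-- The `k`-th ideal GMRES approximation `φ_k(A) = min_{p ∈ π_k} ‖p(A)‖`. -/
noncomputable def phiIdeal {ι : Type*} [Fintype ι] [DecidableEq ι]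
    (A : Matrix ι ι ℝ) (k : ℕ) : ℝ :=
  sInf {r : ℝ | ∃ p : Polynomial ℝ, IsPik k p ∧ r = specNorm (Polynomial.aeval A p)}

/-- Complexification of a real matrix. -/
noncomputable def matC {ι : Type*} (A : Matrix ι ι ℝ) : Matrix ι ι ℂ :=
  A.map fun x => (x : ℂ)

/-- Complexification of a real vector. -/
noncomputable def vecC {ι : Type*} (b : ι → ℝ) : ι → ℂ := fun i => (b i : ℂ)

/-- `Ψ_{k,ℂ,ℝ}(A)`: complex polynomials, real initial vectors. -/
noncomputable def PsiCR {ι : Type*} [Fintype ι] [DecidableEq ι]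
    (A : Matrix ι ι ℝ) (k : ℕ) : ℝ :=
  sSup {r : ℝ | ∃ b : ι → ℝ, euclNorm b = 1 ∧
    r = sInf {s : ℝ | ∃ p : Polynomial ℂ, IsPikC k p ∧
      s = euclNormC ((Polynomial.aeval (matC A) p).mulVec (vecC b))}}

/-- `Ψ_{k,ℂ,ℂ}(A)`: complex polynomials, complex initial vectors. -/
noncomputable def PsiCC {ι : Type*} [Fintype ι] [DecidableEq ι]
    (A : Matrix ι ι ℝ) (k : ℕ) : ℝ :=
  sSup {r : ℝ | ∃ b : ι → ℂ, euclNormC b = 1 ∧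
    r = sInf {s : ℝ | ∃ p : Polynomial ℂ, IsPikC k p ∧
      s = euclNormC ((Polynomial.aeval (matC A) p).mulVec b)}}

/-- `Ψ_{k,ℝ,ℂ}(A)`: real polynomials, complex initial vectors. -/
noncomputable def PsiRC {ι : Type*} [Fintype ι] [DecidableEq ι]
    (A : Matrix ι ι ℝ) (k : ℕ) : ℝ :=
  sSup {r : ℝ | ∃ b : ι → ℂ, euclNormC b = 1 ∧
    r = sInf {s : ℝ | ∃ p : Polynomial ℝ, IsPik k p ∧
      s = euclNormC ((Polynomial.aeval (matC A) (p.map (algebraMap ℝ ℂ))).mulVec b)}}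

/-- `φ_{k,ℝ,ℝ}(A)`. -/
noncomputable def phiRR {ι : Type*} [Fintype ι] [DecidableEq ι]
    (A : Matrix ι ι ℝ) (k : ℕ) : ℝ :=
  sInf {r : ℝ | ∃ p : Polynomial ℝ, IsPik k p ∧
    r = sSup {s : ℝ | ∃ b : ι → ℝ, euclNorm b = 1 ∧
      s = euclNorm ((Polynomial.aeval A p).mulVec b)}}

/-- `φ_{k,ℂ,ℝ}(A)`. -/
noncomputable def phiCR {ι : Type*} [Fintype ι] [DecidableEq ι]
    (A : Matrix ι ι ℝ) (k : ℕ) : ℝ :=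
  sInf {r : ℝ | ∃ p : Polynomial ℂ, IsPikC k p ∧
    r = sSup {s : ℝ | ∃ b : ι → ℝ, euclNorm b = 1 ∧
      s = euclNormC ((Polynomial.aeval (matC A) p).mulVec (vecC b))}}

/-- `φ_{k,ℝ,ℂ}(A)`. -/
noncomputable def phiRC {ι : Type*} [Fintype ι] [DecidableEq ι]
    (A : Matrix ι ι ℝ) (k : ℕ) : ℝ :=
  sInf {r : ℝ | ∃ p : Polynomial ℝ, IsPik k p ∧
    r = sSup {s : ℝ | ∃ b : ι → ℂ, euclNormC b = 1 ∧
      s = euclNormC ((Polynomial.aeval (matC A) (p.map (algebraMap ℝ ℂ))).mulVec b)}}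

/-- `φ_{k,ℂ,ℂ}(A)`. -/
noncomputable def phiCC {ι : Type*} [Fintype ι] [DecidableEq ι]
    (A : Matrix ι ι ℝ) (k : ℕ) : ℝ :=
  sInf {r : ℝ | ∃ p : Polynomial ℂ, IsPikC k p ∧
    r = sSup {s : ℝ | ∃ b : ι → ℂ, euclNormC b = 1 ∧
      s = euclNormC ((Polynomial.aeval (matC A) p).mulVec b)}}

/-- The polynomial of real parts of the coefficients. -/
noncomputable def rePoly (p : Polynomial ℂ) : Polynomial ℝ :=
  ∑ i ∈ Finset.range (p.natDegree + 1), Polynomial.monomial i (p.coeff i).re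

theorem rePoly_isPik {k : ℕ} {p : Polynomial ℂ} (h : IsPikC k p) : IsPik k (rePoly p) := by
  obtain ⟨h1, h2⟩ := h
  refine ⟨?_, ?_⟩
  · unfold rePoly
    refine Polynomial.natDegree_sum_le_of_forall_le _ _ fun i hi => ?_
    refine (Polynomial.natDegree_monomial_le _).trans ?_
    have := Finset.mem_range.1 hi
    omega
  · rw [← Polynomial.coeff_zero_eq_eval_zero] at h2 ⊢
    simp [rePoly, Polynomial.finsetSum_coeff, Polynomial.coeff_monomial, h2]

theorem matC_pow {ι : Type*} [Fintype ι] [DecidableEq ι] (A : Matrix ι ι ℝ) (m : ℕ) :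
    matC A ^ m = matC (A ^ m) := by
  have := map_pow (Complex.ofRealHom.mapMatrix (m := ι)) A m
  exact this.symm

theorem re_aeval {ι : Type*} [Fintype ι] [DecidableEq ι] (A : Matrix ι ι ℝ) (b : ι → ℝ)
    (p : Polynomial ℂ) (i : ι) :
    (((Polynomial.aeval (matC A) p).mulVec (vecC b)) i).re
      = ((Polynomial.aeval A (rePoly p)).mulVec b) i := by
  rw [Polynomial.aeval_eq_sum_range, rePoly, map_sum, Matrix.sum_mulVec, Matrix.sum_mulVec,
    Finset.sum_apply, Finset.sum_apply, Complex.re_sum]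
  refine Finset.sum_congr rfl fun j _ => ?_
  rw [matC_pow, Polynomial.aeval_monomial, ← Algebra.smul_def, Matrix.smul_mulVec,
    Matrix.smul_mulVec]
  simp [Matrix.mulVec, dotProduct, matC, vecC, ← Complex.ofReal_mul, ← Complex.ofReal_sum]

theorem aeval_map_matC {ι : Type*} [Fintype ι] [DecidableEq ι] (A : Matrix ι ι ℝ) (b : ι → ℝ)
    (p : Polynomial ℝ) :
    (Polynomial.aeval (matC A) (p.map (algebraMap ℝ ℂ))).mulVec (vecC b)
      = vecC ((Polynomial.aeval A p).mulVec b) := by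
  rw [Polynomial.aeval_map_algebraMap, Polynomial.aeval_eq_sum_range,
    Polynomial.aeval_eq_sum_range, Matrix.sum_mulVec, Matrix.sum_mulVec]
  funext i
  simp only [vecC, Finset.sum_apply, Complex.ofReal_sum]
  refine Finset.sum_congr rfl fun j _ => ?_
  rw [matC_pow]
  simp [Matrix.mulVec, dotProduct, matC, vecC]

theorem euclNormC_vecC {ι : Type*} [Fintype ι] (b : ι → ℝ) : euclNormC (vecC b) = euclNorm b := by
  simp [euclNormC, euclNorm, vecC]

theorem isPikC_map {k : ℕ} {p : Polynomial ℝ} (h : IsPik k p) :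
    IsPikC k (p.map (algebraMap ℝ ℂ)) := by
  refine ⟨Polynomial.natDegree_map_le.trans h.1, ?_⟩
  have h2 := h.2
  rw [← Polynomial.coeff_zero_eq_eval_zero] at h2 ⊢
  simp [h2]

theorem euclNormC_nonneg {ι : Type*} [Fintype ι] (b : ι → ℂ) : 0 ≤ euclNormC b :=
  Real.sqrt_nonneg _

theorem isPik_one (k : ℕ) : IsPik k 1 := by simp [IsPik]

theorem isPikC_one (k : ℕ) : IsPikC k 1 := by simp [IsPikC]

theorem gmresVal_eq {ι : Type*} [Fintype ι] [DecidableEq ι] (A : Matrix ι ι ℝ) (k : ℕ)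
    (b : ι → ℝ) :
    gmresVal A k b = sInf {s : ℝ | ∃ p : Polynomial ℂ, IsPikC k p ∧
      s = euclNormC ((Polynomial.aeval (matC A) p).mulVec (vecC b))} := by
  unfold gmresVal
  apply le_antisymm
  · refine le_csInf ⟨_, 1, isPikC_one k, rfl⟩ ?_
    rintro s ⟨p, hp, rfl⟩
    refine le_trans (csInf_le (a := euclNorm ((Polynomial.aeval A (rePoly p)).mulVec b))
      ⟨0, ?_⟩ ⟨rePoly p, rePoly_isPik hp, rfl⟩) ?_
    · rintro s ⟨q, -, rfl⟩
      exact Real.sqrt_nonneg _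
    · refine Real.sqrt_le_sqrt (Finset.sum_le_sum fun i _ => ?_)
      rw [← re_aeval, sq_le_sq, abs_norm]
      exact Complex.abs_re_le_norm _
  · refine le_csInf ⟨_, 1, isPik_one k, rfl⟩ ?_
    rintro s ⟨p, hp, rfl⟩
    refine csInf_le ⟨0, ?_⟩ ⟨p.map (algebraMap ℝ ℂ), isPikC_map hp, ?_⟩
    · rintro s ⟨q, -, rfl⟩
      exact Real.sqrt_nonneg _
    · rw [aeval_map_matC, euclNormC_vecC]

theorem valC_le {ι : Type*} [Fintype ι] [DecidableEq ι] (A : Matrix ι ι ℝ) (k : ℕ)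
    (b : ι → ℂ) : sInf {s : ℝ | ∃ p : Polynomial ℂ, IsPikC k p ∧
      s = euclNormC ((Polynomial.aeval (matC A) p).mulVec b)} ≤ euclNormC b := by
  refine csInf_le ⟨0, ?_⟩ ⟨1, isPikC_one k, by simp⟩
  rintro s ⟨q, -, rfl⟩
  exact Real.sqrt_nonneg _

theorem valR_le {ι : Type*} [Fintype ι] [DecidableEq ι] (A : Matrix ι ι ℝ) (k : ℕ)
    (b : ι → ℂ) : sInf {s : ℝ | ∃ p : Polynomial ℝ, IsPik k p ∧
      s = euclNormC ((Polynomial.aeval (matC A) (p.map (algebraMap ℝ ℂ))).mulVec b)}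
      ≤ euclNormC b := by
  refine csInf_le ⟨0, ?_⟩ ⟨1, isPik_one k, by simp⟩
  rintro s ⟨q, -, rfl⟩
  exact Real.sqrt_nonneg _

theorem PsiCR_le_PsiCC {ι : Type*} [Fintype ι] [DecidableEq ι] (A : Matrix ι ι ℝ) (k : ℕ) :
    PsiCR A k ≤ PsiCC A k := by
  unfold PsiCR PsiCC
  refine Real.sSup_le ?_ (Real.sSup_nonneg ?_)
  · rintro r ⟨b, hb, rfl⟩
    refine le_csSup ⟨1, ?_⟩ ⟨vecC b, by rw [euclNormC_vecC, hb], rfl⟩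
    rintro r ⟨c, hc, rfl⟩
    exact hc ▸ valC_le A k c
  · rintro r ⟨c, hc, rfl⟩
    refine Real.sInf_nonneg ?_
    rintro s ⟨q, -, rfl⟩
    exact Real.sqrt_nonneg _

theorem PsiCC_le_PsiRC {ι : Type*} [Fintype ι] [DecidableEq ι] (A : Matrix ι ι ℝ) (k : ℕ) :
    PsiCC A k ≤ PsiRC A k := by
  unfold PsiCC PsiRC
  refine Real.sSup_le ?_ (Real.sSup_nonneg ?_)
  · rintro r ⟨b, hb, rfl⟩
    refine le_trans ?_ (le_csSup ⟨1, ?_⟩ ⟨b, hb, rfl⟩)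
    · refine le_csInf ⟨_, 1, isPik_one k, rfl⟩ ?_
      rintro s ⟨p, hp, rfl⟩
      refine csInf_le ⟨0, ?_⟩ ⟨p.map (algebraMap ℝ ℂ), isPikC_map hp, rfl⟩
      rintro s ⟨q, -, rfl⟩
      exact Real.sqrt_nonneg _
    · rintro r ⟨c, hc, rfl⟩
      exact hc ▸ valR_le A k c
  · rintro r ⟨c, hc, rfl⟩
    refine Real.sInf_nonneg ?_
    rintro s ⟨q, -, rfl⟩
    exact Real.sqrt_nonneg _

/-- For a nonsingular `A ∈ ℝ^{n×n}` and `1 ≤ k ≤ d(A) - 1`: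
`Ψ_{k,ℝ,ℝ}(A) = Ψ_{k,ℂ,ℝ}(A) ≤ Ψ_{k,ℂ,ℂ}(A) ≤ Ψ_{k,ℝ,ℂ}(A)`. -/
theorem worst_case_gmres_real_complex_chain {n : ℕ} (A : Matrix (Fin n) (Fin n) ℝ)
    (hA : IsUnit A) (k : ℕ) (hk1 : 1 ≤ k) (hk2 : k ≤ dA A - 1) :
    Psi A k = PsiCR A k ∧ PsiCR A k ≤ PsiCC A k ∧ PsiCC A k ≤ PsiRC A k := by
  refine ⟨?_, PsiCR_le_PsiCC A k, PsiCC_le_PsiRC A k⟩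
  unfold Psi PsiCR
  simp only [gmresVal_eq]
end

section
/- Let A ∈ ℝ^{n×n} be nonsingular, 1 ≤ k ≤ d(A) − 1, and let B ∈ ℝ^{2n×2n} be the block diagonal matrix B = diag(A, A). Then Ψ_{k,ℝ,ℂ}(A)² = Ψ_{k,ℝ,ℝ}(B)²; that is, the real-polynomial worst-case GMRES approximation of A over complex unit initial vectors equals the real worst-case GMRES approximation of B over real unit initial vectors. -/
open Polynomial Matrix

/-- Stack real and imaginary parts. -/
noncomputable def stackRI {n : ℕ} (b : Fin n → ℂ) : Fin n ⊕ Fin n → ℝ :=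
  Sum.elim (fun i => (b i).re) (fun i => (b i).im)

theorem euclNorm_stackRI {n : ℕ} (b : Fin n → ℂ) : euclNorm (stackRI b) = euclNormC b := by
  unfold euclNorm euclNormC stackRI
  congr 1
  rw [Fintype.sum_sum_type, ← Finset.sum_add_distrib]
  refine Finset.sum_congr rfl fun i _ => ?_
  rw [← Complex.normSq_eq_norm_sq, Complex.normSq_apply]
  simp only [Sum.elim_inl, Sum.elim_inr]
  ring

theorem stackRI_surj {n : ℕ} (v : Fin n ⊕ Fin n → ℝ) : ∃ b : Fin n → ℂ, stackRI b = v := by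
  refine ⟨fun i => ⟨v (Sum.inl i), v (Sum.inr i)⟩, ?_⟩
  funext i
  cases i <;> rfl

theorem aeval_fromBlocks_diag {n : ℕ} (A : Matrix (Fin n) (Fin n) ℝ) (p : Polynomial ℝ) :
    Polynomial.aeval (Matrix.fromBlocks A 0 0 A) p =
      Matrix.fromBlocks (Polynomial.aeval A p) 0 0 (Polynomial.aeval A p) := by
  have hpow : ∀ m : ℕ, (Matrix.fromBlocks A 0 0 A) ^ m =
      Matrix.fromBlocks (A ^ m) 0 0 (A ^ m) := by
    intro m
    induction m with
    | zero => simp [Matrix.fromBlocks_one]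
    | succ m ih => rw [pow_succ, ih, Matrix.fromBlocks_multiply]; simp [pow_succ]
  induction p using Polynomial.induction_on' with
  | add p q hp hq => rw [map_add, hp, hq, Matrix.fromBlocks_add]; simp
  | monomial m a =>
    simp [Polynomial.aeval_monomial, hpow, ← Algebra.smul_def, Matrix.fromBlocks_smul]

theorem aeval_matC {n : ℕ} (A : Matrix (Fin n) (Fin n) ℝ) (p : Polynomial ℝ) :
    Polynomial.aeval (matC A) (p.map (algebraMap ℝ ℂ)) = matC (Polynomial.aeval A p) := by
  have h : ∀ M : Matrix (Fin n) (Fin n) ℝ, matC M = (Complex.ofRealAm.mapMatrix) M :=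
    fun _ => rfl
  rw [Polynomial.aeval_map_algebraMap, h, h, Polynomial.aeval_algHom_apply]

theorem stackRI_mulVec {n : ℕ} (M : Matrix (Fin n) (Fin n) ℝ) (b : Fin n → ℂ) :
    stackRI (matC M *ᵥ b) = Matrix.fromBlocks M 0 0 M *ᵥ stackRI b := by
  rw [Matrix.fromBlocks_mulVec]
  funext i
  cases i <;> simp [stackRI, matC, Matrix.mulVec, dotProduct, Complex.re_sum, Complex.im_sum]

theorem key_norm {n : ℕ} (A : Matrix (Fin n) (Fin n) ℝ) (p : Polynomial ℝ) (b : Fin n → ℂ) :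
    euclNormC ((Polynomial.aeval (matC A) (p.map (algebraMap ℝ ℂ))).mulVec b) =
      euclNorm ((Polynomial.aeval (Matrix.fromBlocks A 0 0 A) p).mulVec (stackRI b)) := by
  rw [aeval_fromBlocks_diag, aeval_matC, ← stackRI_mulVec, euclNorm_stackRI]

/-- For a nonsingular `A ∈ ℝ^{n×n}`, `1 ≤ k ≤ d(A) - 1`, and the block diagonal
matrix `B = diag(A,A) ∈ ℝ^{2n×2n}`, one has `Ψ_{k,ℝ,ℂ}(A)² = Ψ_{k,ℝ,ℝ}(B)²`. -/
theorem worst_case_complex_vectors_eq_block_diag {n : ℕ} (A : Matrix (Fin n) (Fin n) ℝ)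
    (hA : IsUnit A) (k : ℕ) (hk1 : 1 ≤ k) (hk2 : k ≤ dA A - 1) :
    PsiRC A k ^ 2 = Psi (Matrix.fromBlocks A 0 0 A) k ^ 2 := by
  have hEq : PsiRC A k = Psi (Matrix.fromBlocks A 0 0 A) k := by
    unfold PsiRC Psi gmresVal
    simp only [key_norm]
    congr 1
    ext r
    constructor
    · rintro ⟨b, hb, hr⟩
      exact ⟨stackRI b, by rw [euclNorm_stackRI, hb], hr⟩
    · rintro ⟨v, hv, hr⟩
      obtain ⟨b, rfl⟩ := stackRI_surj v
      exact ⟨b, by rw [← euclNorm_stackRI, hv], hr⟩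
  rw [hEq]
end
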